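/- arXiv:2012.08376 — 2 statements merged into one kernel-verified Lean document; each statement's English description precedes it below -/
import Mathlib

section
/- Let q₀ ∈ ℍ ∖ ℝ and p ≥ 1. Then for every 0 ≤ k < p, the function ∂_s(∂_c∂_s)^k (Δ_{q₀}^p) vanishes at q₀. -/
noncomputable section

open Quaternion

abbrev ℍq := Quaternion ℝ

/-- Spherical value of a function of a quaternionic variable. -/
def svalue (f : ℍq → ℍq) (x : ℍq) : ℍq := (f x + f (star x)) / 2

/-- Spherical derivative of a function of a quaternionic variable. -/
def sderiv' (f : ℍq → ℍq) (x : ℍq) : ℍq := (2 * x.im)⁻¹ * (f x - f (star x))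

/-- The imaginary unit `Im(x)/|Im(x)|` attached to a (non-real) quaternion. -/
def qJ (x : ℍq) : ℍq := (‖x.im‖)⁻¹ • x.im

/-- Slice (Cullen) derivative `∂_c f = (1/2)(∂/∂α − I ∂/∂β) f` at `x = α + Iβ`. -/
def cderiv (f : ℍq → ℍq) (x : ℍq) : ℍq :=
  (1/2 : ℝ) • (fderiv ℝ f x 1 - qJ x * fderiv ℝ f x (qJ x))

/-- The conjugate operator `∂̄_c f = (1/2)(∂/∂α + I ∂/∂β) f`. -/
def cderivBar (f : ℍq → ℍq) (x : ℍq) : ℍq :=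
  (1/2 : ℝ) • (fderiv ℝ f x 1 + qJ x * fderiv ℝ f x (qJ x))

/-- A circular (axially symmetric) subset of the quaternions. -/
def IsCircular (Ω : Set ℍq) : Prop :=
  ∀ x ∈ Ω, ∀ y : ℍq, y.re = x.re → ‖y.im‖ = ‖x.im‖ → y ∈ Ω

/-- A slice function on `Ω`: it is determined by the representation formula
`f(α + Iβ) = F₀(α,β) + I F₁(α,β)` with `F₀ = v_s f`, `F₁ = β ∂_s f`. -/
def IsSlice (Ω : Set ℍq) (f : ℍq → ℍq) : Prop :=
  ∀ x ∈ Ω, ∀ y ∈ Ω, x.re = y.re → ‖x.im‖ = ‖y.im‖ →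
    f x = svalue f y + x.im * sderiv' f y

/-- A slice regular function on a circular domain: a real-differentiable slice
function whose stem function is holomorphic, i.e. `∂̄_c f = 0` off the reals. -/
def IsSliceRegular (Ω : Set ℍq) (f : ℍq → ℍq) : Prop :=
  IsSlice Ω f ∧ DifferentiableOn ℝ f Ω ∧ ∀ x ∈ Ω, x.im ≠ 0 → cderivBar f x = 0

/-- Pointwise formula for the slice product `f·g = 𝓘(FG)` of two slice functions. -/
def sprod (f g : ℍq → ℍq) (x : ℍq) : ℍq :=
  svalue f x * svalue g x + x.im * x.im * (sderiv' f x * sderiv' g x)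
    + x.im * (svalue f x * sderiv' g x + sderiv' f x * svalue g x)

/-- Characteristic polynomial of `q₀`: `Δ_{q₀}(x) = x² − 2 Re(q₀) x + |q₀|²`. -/
def Delta (q₀ : ℍq) (x : ℍq) : ℍq := x ^ 2 - 2 * (q₀.re : ℍq) * x + ((‖q₀‖ ^ 2 : ℝ) : ℍq)

/-- The operator `∂_c ∂_s`. -/
def opCS (f : ℍq → ℍq) : ℍq → ℍq := cderiv (sderiv' f)

/-- The operator `∂_s ∂_c`. -/
def opSC (f : ℍq → ℍq) : ℍq → ℍq := sderiv' (cderiv f)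

/-!
`Δ_{q₀}` vanishes on the whole sphere of `q₀`, in particular at `q₀` and at its conjugate, so
`Δ_{q₀} ^ p` vanishes there to order `p` in the sense of real calculus. At a non-real point `∂_s`
multiplies `f - f ∘ star` by a smooth function, hence preserves the order of vanishing at the pair
`{q₀, star q₀}`, whereas `∂_c` is a first-order operator and lowers it by at most one. Therefore
`∂_s(∂_c∂_s)^k (Δ_{q₀} ^ p)` still vanishes to order `p - k > 0`.
-/

open scoped ContDiff

section VanishesToOrder

variable {𝕜 : Type*} [NontriviallyNormedField 𝕜]
  {E : Type*} [NormedAddCommGroup E] [NormedSpace 𝕜 E]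
  {F : Type*} [NormedAddCommGroup F] [NormedSpace 𝕜 F]
  {G : Type*} [NormedAddCommGroup G] [NormedSpace 𝕜 G]
  {H : Type*} [NormedAddCommGroup H] [NormedSpace 𝕜 H]

variable (𝕜) in
/-- `f` vanishes to order at least `n` at `x`: its derivatives of order less than `n` are zero
there. Smoothness at `x` is part of the notion, so that none of these derivatives is a junk
value. -/
structure VanishesToOrder (n : ℕ) (f : E → F) (x : E) : Prop where
  contDiffAt : ContDiffAt 𝕜 ∞ f x
  iteratedFDeriv_eq_zero : ∀ i < n, iteratedFDeriv 𝕜 i f x = 0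

theorem norm_iteratedFDeriv_le_of_bilinear_of_contDiffAt (B : F →L[𝕜] G →L[𝕜] H) {f : E → F}
    {g : E → G} {x : E} {n : ℕ} (hf : ContDiffAt 𝕜 n f x) (hg : ContDiffAt 𝕜 n g x) :
    ‖iteratedFDeriv 𝕜 n (fun y => B (f y) (g y)) x‖ ≤
      ‖B‖ * ∑ i ∈ Finset.range (n + 1),
        (n.choose i : ℝ) * ‖iteratedFDeriv 𝕜 i f x‖ * ‖iteratedFDeriv 𝕜 (n - i) g x‖ := by
  obtain ⟨u, hu, hu_open, hxu⟩ :=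
    eventually_nhds_iff.1 ((hf.eventually (by simp)).and (hg.eventually (by simp)))
  have h := B.norm_iteratedFDerivWithin_le_of_bilinear
    (fun y hy => (hu y hy).1.contDiffWithinAt) (fun y hy => (hu y hy).2.contDiffWithinAt)
    hu_open.uniqueDiffOn hxu le_rfl
  simpa only [iteratedFDerivWithin_of_isOpen _ hu_open hxu] using h

variable {m n : ℕ} {x : E} {f : E → F}

theorem vanishesToOrder_zero_iff : VanishesToOrder 𝕜 0 f x ↔ ContDiffAt 𝕜 ∞ f x :=
  ⟨fun h => h.contDiffAt, fun h => ⟨h, by simp⟩⟩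

theorem vanishesToOrder_one_iff :
    VanishesToOrder 𝕜 1 f x ↔ ContDiffAt 𝕜 ∞ f x ∧ f x = 0 := by
  have iteratedFDeriv_zero_eq_zero : iteratedFDeriv 𝕜 0 f x = 0 ↔ f x = 0 := by
    rw [← norm_eq_zero, norm_iteratedFDeriv_zero, norm_eq_zero]
  refine ⟨fun h => ⟨h.contDiffAt, ?_⟩, fun ⟨hf, hfx⟩ => ⟨hf, fun i hi => ?_⟩⟩
  · exact iteratedFDeriv_zero_eq_zero.1 (h.iteratedFDeriv_eq_zero 0 one_pos)
  · obtain rfl : i = 0 := by omega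
    exact iteratedFDeriv_zero_eq_zero.2 hfx

namespace VanishesToOrder

theorem mono (hf : VanishesToOrder 𝕜 n f x) (h : m ≤ n) : VanishesToOrder 𝕜 m f x :=
  ⟨hf.contDiffAt, fun i hi => hf.iteratedFDeriv_eq_zero i (hi.trans_le h)⟩

protected theorem sub {g : E → F} (hf : VanishesToOrder 𝕜 n f x)
    (hg : VanishesToOrder 𝕜 n g x) : VanishesToOrder 𝕜 n (fun y => f y - g y) x where
  contDiffAt := hf.contDiffAt.sub hg.contDiffAt
  iteratedFDeriv_eq_zero i hi := by
    rw [fun_iteratedFDeriv_sub_apply (hf.contDiffAt.of_le (mod_cast le_top))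
      (hg.contDiffAt.of_le (mod_cast le_top)), hf.iteratedFDeriv_eq_zero i hi,
      hg.iteratedFDeriv_eq_zero i hi, sub_zero]

theorem comp_continuousLinearEquiv {e : G ≃L[𝕜] E} {x : G} (hf : VanishesToOrder 𝕜 n f (e x)) :
    VanishesToOrder 𝕜 n (fun y => f (e y)) x where
  contDiffAt := hf.contDiffAt.comp x e.contDiff.contDiffAt
  iteratedFDeriv_eq_zero i hi := by
    have h := e.iteratedFDerivWithin_comp_right f uniqueDiffOn_univ (Set.mem_univ (e x)) i
    rw [Set.preimage_univ, iteratedFDerivWithin_univ, iteratedFDerivWithin_univ,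
      hf.iteratedFDeriv_eq_zero i hi] at h
    exact h

theorem bilinear (B : F →L[𝕜] G →L[𝕜] H) {g : E → G} (hf : VanishesToOrder 𝕜 m f x)
    (hg : VanishesToOrder 𝕜 n g x) : VanishesToOrder 𝕜 (m + n) (fun y => B (f y) (g y)) x where
  contDiffAt := (B.contDiff.contDiffAt.comp x hf.contDiffAt).clm_apply hg.contDiffAt
  iteratedFDeriv_eq_zero i hi := by
    have leibniz := norm_iteratedFDeriv_le_of_bilinear_of_contDiffAt B (n := i)
      (hf.contDiffAt.of_le (mod_cast le_top)) (hg.contDiffAt.of_le (mod_cast le_top))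
    refine norm_le_zero_iff.1 (leibniz.trans_eq ?_)
    refine mul_eq_zero_of_right _ (Finset.sum_eq_zero fun j hj => ?_)
    rw [Finset.mem_range] at hj
    rcases lt_or_ge j m with hjm | hmj
    · simp [hf.iteratedFDeriv_eq_zero j hjm]
    · simp [hg.iteratedFDeriv_eq_zero (i - j) (by omega)]

protected theorem fderiv (hf : VanishesToOrder 𝕜 (n + 1) f x) :
    VanishesToOrder 𝕜 n (fderiv 𝕜 f) x where
  contDiffAt := hf.contDiffAt.fderiv_right (by simp)
  iteratedFDeriv_eq_zero i hi := by
    rw [← norm_eq_zero, norm_iteratedFDeriv_fderiv, norm_eq_zero]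
    exact hf.iteratedFDeriv_eq_zero (i + 1) (by omega)

theorem fderiv_apply {v : E → E} (hf : VanishesToOrder 𝕜 (n + 1) f x)
    (hv : ContDiffAt 𝕜 ∞ v x) : VanishesToOrder 𝕜 n (fun y => fderiv 𝕜 f y (v y)) x :=
  hf.fderiv.bilinear (.id 𝕜 (E →L[𝕜] F)) (vanishesToOrder_zero_iff.2 hv)

theorem const_smul (c : 𝕜) (hf : VanishesToOrder 𝕜 n f x) :
    VanishesToOrder 𝕜 n (fun y => c • f y) x := by
  simpa using (vanishesToOrder_zero_iff.2 contDiffAt_const).bilinear (.lsmul 𝕜 𝕜) hf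

section Algebra

variable {A : Type*} [NormedRing A] [NormedAlgebra 𝕜 A] {u v : E → A}

protected theorem mul (hu : VanishesToOrder 𝕜 m u x) (hv : VanishesToOrder 𝕜 n v x) :
    VanishesToOrder 𝕜 (m + n) (fun y => u y * v y) x :=
  hu.bilinear (.mul 𝕜 A) hv

theorem mul_of_contDiffAt_left (hu : ContDiffAt 𝕜 ∞ u x) (hv : VanishesToOrder 𝕜 n v x) :
    VanishesToOrder 𝕜 n (fun y => u y * v y) x := by
  simpa using (vanishesToOrder_zero_iff.2 hu).mul hv

protected theorem pow (hu : VanishesToOrder 𝕜 m u x) (p : ℕ) :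
    VanishesToOrder 𝕜 (p * m) (fun y => u y ^ p) x := by
  induction p with
  | zero => simpa [vanishesToOrder_zero_iff] using contDiffAt_const
  | succ p ih => simpa only [pow_succ, add_one_mul] using ih.mul hu

end Algebra

end VanishesToOrder

end VanishesToOrder

instance {R : Type*} [CommRing R] [StarRing R] [TrivialStar R] : StarModule R ℍ[R] where
  star_smul r x := by rw [Quaternion.star_smul, star_trivial r]

section Smoothness

variable {n : ℕ∞ω} {x : ℍq}

theorem contDiff_im : ContDiff ℝ n fun x : ℍq => x.im := by
  have im_eq (x : ℍq) : x.im = (2⁻¹ : ℝ) • (x - star x) := by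
    ext <;> simp <;> ring
  simp_rw [im_eq]
  exact (contDiff_id.sub (starL' ℝ).contDiff).const_smul _

theorem contDiffAt_qJ (hx : x.im ≠ 0) : ContDiffAt ℝ n qJ x :=
  ((contDiff_im.contDiffAt.norm ℝ hx).inv (norm_ne_zero_iff.2 hx)).smul contDiff_im.contDiffAt

theorem contDiffAt_inv_two_mul_im (hx : x.im ≠ 0) :
    ContDiffAt ℝ n (fun y : ℍq => (2 * y.im)⁻¹) x := by
  have : CharZero ℍq := charZero_of_injective_algebraMap (algebraMap ℝ ℍq).injective
  exact (analyticAt_inv (mul_ne_zero two_ne_zero hx)).contDiffAt.comp x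
    (contDiffAt_const.mul contDiff_im.contDiffAt)

theorem contDiff_Delta (q : ℍq) : ContDiff ℝ n (Delta q) := by
  unfold Delta
  fun_prop

end Smoothness

theorem Delta_eq_zero_of_re_eq_of_norm_eq {q x : ℍq} (hre : x.re = q.re) (hnorm : ‖x‖ = ‖q‖) :
    Delta q x = 0 := by
  rw [Delta, ← hre, ← hnorm, ← Quaternion.self_add_star, sq ‖x‖,
    ← Quaternion.normSq_eq_norm_mul_self, ← Quaternion.star_mul_self]
  noncomm_ring

namespace VanishesToOrder

variable {n k : ℕ} {f : ℍq → ℍq} {x : ℍq}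

protected theorem sderiv' (hx : x.im ≠ 0) (hf : VanishesToOrder ℝ n f x)
    (hf' : VanishesToOrder ℝ n f (star x)) : VanishesToOrder ℝ n (sderiv' f) x :=
  mul_of_contDiffAt_left (contDiffAt_inv_two_mul_im hx)
    (hf.sub (hf'.comp_continuousLinearEquiv (e := starL' ℝ)))

protected theorem cderiv (hx : x.im ≠ 0) (hf : VanishesToOrder ℝ (n + 1) f x) :
    VanishesToOrder ℝ n (cderiv f) x :=
  ((hf.fderiv_apply contDiffAt_const).sub
    (mul_of_contDiffAt_left (contDiffAt_qJ hx) (hf.fderiv_apply (contDiffAt_qJ hx)))).const_smul _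

theorem iterate_opCS (hx : x.im ≠ 0) (hf : VanishesToOrder ℝ (n + k) f x)
    (hf' : VanishesToOrder ℝ (n + k) f (star x)) : VanishesToOrder ℝ n (opCS^[k] f) x := by
  induction k generalizing n x with
  | zero => exact hf
  | succ k ih =>
    rw [← add_assoc, add_right_comm] at hf hf'
    rw [Function.iterate_succ_apply']
    have hx' : (star x).im ≠ 0 := by simpa using hx
    have at_self : VanishesToOrder ℝ (n + 1) (opCS^[k] f) x := ih hx hf hf'
    have at_star : VanishesToOrder ℝ (n + 1) (opCS^[k] f) (star x) :=
      ih hx' hf' (by rwa [star_star])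
    exact (at_self.sderiv' hx at_star).cderiv hx

end VanishesToOrder

theorem vanishesToOrder_Delta_pow {q x : ℍq} (hre : x.re = q.re) (hnorm : ‖x‖ = ‖q‖) (p : ℕ) :
    VanishesToOrder ℝ p (fun y => Delta q y ^ p) x := by
  have h : VanishesToOrder ℝ 1 (Delta q) x := vanishesToOrder_one_iff.2
    ⟨(contDiff_Delta q).contDiffAt, Delta_eq_zero_of_re_eq_of_norm_eq hre hnorm⟩
  simpa using h.pow p

/-- `∂_s(∂_c∂_s)^k Δ_{q₀}^p` vanishes at `q₀` for `k < p`. -/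
theorem sderiv_opCS_iterate_Delta_pow (q₀ : ℍq) (hq₀ : q₀.im ≠ 0)
    (p k : ℕ) (hp : 1 ≤ p) (hk : k < p) :
    sderiv' (opCS^[k] (fun x => Delta q₀ x ^ p)) q₀ = 0 := by
  obtain ⟨m, rfl⟩ : ∃ m, p = m + 1 + k := ⟨p - k - 1, by omega⟩
  have at_self := vanishesToOrder_Delta_pow (x := q₀) rfl rfl (m + 1 + k)
  have at_star := vanishesToOrder_Delta_pow (Quaternion.re_star q₀) (Quaternion.norm_star q₀)
    (m + 1 + k)
  have hq₀' : (star q₀).im ≠ 0 := by simpa using hq₀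
  have h : VanishesToOrder ℝ (m + 1) (sderiv' (opCS^[k] fun x => Delta q₀ x ^ (m + 1 + k))) q₀ :=
    (at_self.iterate_opCS hq₀ at_star).sderiv' hq₀
      (at_star.iterate_opCS hq₀' (by rwa [star_star]))
  exact (vanishesToOrder_one_iff.1 (h.mono (by omega))).2
end
end

section
/- Let q₀ ∈ ℍ ∖ ℝ and p ≥ 1. Then for all 0 ≤ k ≤ p, the value of (∂_c∂_s)^k applied to x ↦ Δ_{q₀}^p(x)(x − q₀), evaluated at x = q₀, equals 0. -/
noncomputable section

open Quaternion

/-! A slice function is `f(x) = α + Im(x) β`, where `α` and `β` depend only on `s = Re(x)` and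
`u = Im(x)² = -|Im(x)|²`. In these coordinates `∂_s f = β`, the Cauchy-Riemann equations read
`∂α/∂s = β + 2u ∂β/∂u` and `∂β/∂s = 2 ∂α/∂u`, and the second of them gives
`∂_c∂_s f = ∂α/∂u + Im(x) ∂β/∂u`. Thus `(∂_c∂_s)^k` is `(∂/∂u)^k` acting on `α` and `β`.
For `f = Δ_{q₀}^p(x)(x - q₀)` the combination `α + Im(q₀) β` vanishes on the whole line
`s = Re(q₀)`, because on it `Δ_{q₀}` is the real function `u + |Im(q₀)|²` and
`x - q₀ = Im(x) - Im(q₀)`; hence so do all its `u`-derivatives, and the value at `q₀` is one of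
them. -/

open Set
open scoped ContDiff

section PartialDerivatives

variable {E : Type*} [NormedAddCommGroup E] [NormedSpace ℝ E]
variable {R : Type*} [NormedRing R] [NormedAlgebra ℝ R]

/-- The partial derivative `∂/∂s` in the coordinates `(s, u)` of `sliceCoord`, `s = Re(x)`. -/
def reDeriv (F : ℝ × ℝ → E) (p : ℝ × ℝ) : E := fderiv ℝ F p (1, 0)

/-- The partial derivative `∂/∂u` in the coordinates `(s, u)` of `sliceCoord`, `u = Im(x)²`. -/
def imSqDeriv (F : ℝ × ℝ → E) (p : ℝ × ℝ) : E := fderiv ℝ F p (0, 1)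

theorem contDiff_imSqDeriv {F : ℝ × ℝ → E} (hF : ContDiff ℝ ∞ F) :
    ContDiff ℝ ∞ (imSqDeriv F) :=
  (hF.fderiv_right (by simp)).clm_apply contDiff_const

theorem reDeriv_imSqDeriv {F : ℝ × ℝ → E} (hF : ContDiff ℝ 2 F) (p : ℝ × ℝ) :
    reDeriv (imSqDeriv F) p = imSqDeriv (reDeriv F) p := by
  have hF' : DifferentiableAt ℝ (fderiv ℝ F) p :=
    (hF.fderiv_right (m := 1) (by norm_num)).differentiable (by norm_num) p
  have hsymm : IsSymmSndFDerivAt ℝ F p := hF.contDiffAt.isSymmSndFDerivAt (by simp)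
  unfold reDeriv imSqDeriv
  rw [fderiv_clm_apply hF' (differentiableAt_const _),
    fderiv_clm_apply hF' (differentiableAt_const _)]
  simpa using hsymm (1, 0) (0, 1)

theorem imSqDeriv_const_smul {F : ℝ × ℝ → E} {p : ℝ × ℝ} (hF : DifferentiableAt ℝ F p)
    (r : ℝ) : imSqDeriv (fun y => r • F y) p = r • imSqDeriv F p := by
  rw [imSqDeriv, fderiv_fun_const_smul hF, smul_apply, imSqDeriv]

theorem hasDerivAt_imSqDeriv {F : ℝ × ℝ → E} {s u : ℝ} (hF : DifferentiableAt ℝ F (s, u)) :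
    HasDerivAt (fun t => F (s, t)) (imSqDeriv F (s, u)) u :=
  hF.hasFDerivAt.comp_hasDerivAt u ((hasDerivAt_const u s).prodMk (hasDerivAt_id u))

theorem imSqDeriv_add_mul_eq_zero {α β : ℝ × ℝ → R} (hα : Differentiable ℝ α)
    (hβ : Differentiable ℝ β) {w : R} {s : ℝ} (h : ∀ u, α (s, u) + w * β (s, u) = 0) (u : ℝ) :
    imSqDeriv α (s, u) + w * imSqDeriv β (s, u) = 0 := by
  have hderiv := (hasDerivAt_imSqDeriv (hα (s, u))).add
    ((hasDerivAt_imSqDeriv (hβ (s, u))).const_mul w)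
  have hzero : ((fun t => α (s, t)) + fun t => w * β (s, t)) = fun _ => 0 := funext h
  rw [hzero] at hderiv
  exact hderiv.unique (hasDerivAt_const u 0)

theorem imSqDeriv_iterate_add_mul_eq_zero {α β : ℝ × ℝ → R} (hα : ContDiff ℝ ∞ α)
    (hβ : ContDiff ℝ ∞ β) {w : R} {s : ℝ} (h : ∀ u, α (s, u) + w * β (s, u) = 0) (k : ℕ)
    (u : ℝ) : imSqDeriv^[k] α (s, u) + w * imSqDeriv^[k] β (s, u) = 0 := by
  induction k generalizing α β with
  | zero => exact h u
  | succ _ ih =>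
    exact ih (contDiff_imSqDeriv hα) (contDiff_imSqDeriv hβ) (imSqDeriv_add_mul_eq_zero
      (hα.differentiable (by simp)) (hβ.differentiable (by simp)) h)

/-- `α` and `β` are the components of a smooth slice regular function `α + Im(x) β`: they satisfy
the Cauchy-Riemann equations of the stem function `(α, |Im(x)| β)`, rewritten in the coordinates
`(s, u)` of `sliceCoord`. -/
structure IsRegularStem (α β : ℝ × ℝ → E) : Prop where
  contDiff_fst : ContDiff ℝ ∞ α
  contDiff_snd : ContDiff ℝ ∞ β
  reDeriv_fst (p : ℝ × ℝ) : reDeriv α p = β p + (2 * p.2) • imSqDeriv β p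
  reDeriv_snd (p : ℝ × ℝ) : reDeriv β p = (2 : ℝ) • imSqDeriv α p

theorem IsRegularStem.smul {A B : ℝ × ℝ → ℝ} {α β : ℝ × ℝ → E} (hAB : IsRegularStem A B)
    (hαβ : IsRegularStem α β) :
    IsRegularStem (fun p => A p • α p + (p.2 * B p) • β p) (fun p => A p • β p + B p • α p) := by
  obtain ⟨hA, hB, hA_re, hB_re⟩ := hAB
  obtain ⟨hα, hβ, hα_re, hβ_re⟩ := hαβ
  have dA := hA.differentiable (by simp)
  have dB := hB.differentiable (by simp)
  have dα := hα.differentiable (by simp)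
  have dβ := hβ.differentiable (by simp)
  have hfst (p v : ℝ × ℝ) : fderiv ℝ (fun p => A p • α p + (p.2 * B p) • β p) p v =
      A p • fderiv ℝ α p v + fderiv ℝ A p v • α p + ((p.2 * B p) • fderiv ℝ β p v +
        (p.2 * fderiv ℝ B p v + v.2 * B p) • β p) := by
    have h := ((dA p).hasFDerivAt.fun_smul (dα p).hasFDerivAt).fun_add
      ((hasFDerivAt_snd.fun_mul (dB p).hasFDerivAt).fun_smul (dβ p).hasFDerivAt)
    rw [h.fderiv]
    simp [mul_comm (B p)]
  have hsnd (p v : ℝ × ℝ) : fderiv ℝ (fun p => A p • β p + B p • α p) p v =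
      A p • fderiv ℝ β p v + fderiv ℝ A p v • β p +
        (B p • fderiv ℝ α p v + fderiv ℝ B p v • α p) := by
    have h := ((dA p).hasFDerivAt.fun_smul (dβ p).hasFDerivAt).fun_add
      ((dB p).hasFDerivAt.fun_smul (dα p).hasFDerivAt)
    rw [h.fderiv]
    simp
  simp only [reDeriv, imSqDeriv, smul_eq_mul] at hA_re hB_re hα_re hβ_re
  refine ⟨by fun_prop, by fun_prop, fun p => ?_, fun p => ?_⟩ <;>
  · simp only [reDeriv, imSqDeriv, hfst, hsnd, hA_re, hB_re, hα_re, hβ_re]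
    module

theorem isRegularStem_affine (a b : E) :
    IsRegularStem (fun p : ℝ × ℝ => p.1 • a + b) (fun _ => a) := by
  have hfst (p v : ℝ × ℝ) : fderiv ℝ (fun p : ℝ × ℝ => p.1 • a + b) p v = v.1 • a := by
    have h := ((hasFDerivAt_fst (𝕜 := ℝ) (p := p)).smul_const a).add_const b
    rw [h.fderiv]
    simp
  refine ⟨by fun_prop, by fun_prop, fun p => ?_, fun p => ?_⟩ <;>
  · simp only [reDeriv, imSqDeriv, hfst]
    simp

end PartialDerivatives

section SliceFunctions

/-- The coordinates `(s, u) = (Re(x), Im(x)²)` of the sphere through `x`, where the real number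
`Im(x)²` is `-|Im(x)|²`. -/
def sliceCoord (x : ℍq) : ℝ × ℝ := (x.re, -‖x.im‖ ^ 2)

/-- The slice function `α + Im(x) β`. In the usual notation `𝓘(F₀ + ι F₁)` for slice functions,
`F₀ = α` and `F₁ = |Im(x)| β`, so that `β` is the spherical derivative. -/
def ofStem (α β : ℝ × ℝ → ℍq) (x : ℍq) : ℍq := α (sliceCoord x) + x.im * β (sliceCoord x)

theorem sliceCoord_star (x : ℍq) : sliceCoord (star x) = sliceCoord x := by
  simp [sliceCoord]

theorem im_mul_im (x : ℍq) : x.im * x.im = ((-‖x.im‖ ^ 2 : ℝ) : ℍq) := by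
  rw [← sq, Quaternion.im_sq, Quaternion.normSq_eq_norm_mul_self, sq, Quaternion.coe_neg]

theorem isOpen_im_ne_zero : IsOpen {x : ℍq | x.im ≠ 0} :=
  isOpen_ne_fun Quaternion.continuous_im continuous_const

theorem fderiv_comp_sliceCoord {E : Type*} [NormedAddCommGroup E] [NormedSpace ℝ E]
    {F : ℝ × ℝ → E} {x : ℍq} (hF : DifferentiableAt ℝ F (sliceCoord x)) (h : ℍq) :
    fderiv ℝ (fun y => F (sliceCoord y)) x h =
      h.re • reDeriv F (sliceCoord x) - (2 * inner ℝ x.im h.im) • imSqDeriv F (sliceCoord x) := by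
  let reL : ℍq →L[ℝ] ℝ := LinearMap.toContinuousLinearMap (QuaternionAlgebra.reₗ (-1) 0 (-1))
  let imL : ℍq →L[ℝ] ℍq := LinearMap.toContinuousLinearMap
    { toFun := fun y : ℍq => y.im, map_add' := by simp, map_smul' := by simp }
  have hcoord : HasFDerivAt sliceCoord (reL.prod (-(2 • (innerSL ℝ x.im).comp imL))) x :=
    reL.hasFDerivAt.prodMk imL.hasFDerivAt.norm_sq.neg
  have happly : (reL.prod (-(2 • (innerSL ℝ x.im).comp imL))) h =
      h.re • (1, 0) - (2 * inner ℝ x.im h.im) • (0, 1) := by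
    have hre : reL h = h.re := rfl
    simp [hre, imL]
  have hcomp : HasFDerivAt (fun y => F (sliceCoord y)) _ x := hF.hasFDerivAt.comp x hcoord
  rw [hcomp.fderiv, ContinuousLinearMap.comp_apply, happly, map_sub, map_smul, map_smul, reDeriv,
    imSqDeriv]

theorem cderiv_comp_sliceCoord {F : ℝ × ℝ → ℍq} {x : ℍq}
    (hF : DifferentiableAt ℝ F (sliceCoord x)) (hx : x.im ≠ 0) :
    cderiv (fun y => F (sliceCoord y)) x =
      (1 / 2 : ℝ) • reDeriv F (sliceCoord x) + x.im * imSqDeriv F (sliceCoord x) := by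
  have hn : ‖x.im‖ ≠ 0 := norm_ne_zero_iff.mpr hx
  have hre : (qJ x).re = 0 := by simp [qJ]
  have hinner : inner ℝ x.im (qJ x).im = ‖x.im‖ := by
    rw [qJ, Quaternion.im_smul, Quaternion.im_idem, inner_smul_right, real_inner_self_eq_norm_sq]
    field_simp
  have hone : fderiv ℝ (fun y => F (sliceCoord y)) x 1 = reDeriv F (sliceCoord x) := by
    simp [fderiv_comp_sliceCoord hF]
  have hqJ : qJ x * fderiv ℝ (fun y => F (sliceCoord y)) x (qJ x) =
      -(2 : ℝ) • (x.im * imSqDeriv F (sliceCoord x)) := by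
    rw [fderiv_comp_sliceCoord hF, hre, hinner, zero_smul, zero_sub, mul_neg, mul_smul_comm, qJ,
      smul_mul_assoc, smul_smul, mul_assoc, mul_inv_cancel₀ hn, mul_one, neg_smul]
  rw [cderiv, hone, hqJ]
  module

theorem sderiv'_ofStem (α β : ℝ × ℝ → ℍq) {x : ℍq} (hx : x.im ≠ 0) :
    sderiv' (ofStem α β) x = β (sliceCoord x) := by
  have hdiff : ofStem α β x - ofStem α β (star x) = 2 * x.im * β (sliceCoord x) := by
    simp only [ofStem, sliceCoord_star, Quaternion.im_star]
    noncomm_ring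
  have htwo : 2 * x.im ≠ 0 := by
    rw [two_mul, ← two_smul ℝ]
    exact smul_ne_zero two_ne_zero hx
  rw [sderiv', hdiff, inv_mul_cancel_left₀ htwo]

theorem cderiv_eqOn {f g : ℍq → ℍq} (hfg : EqOn f g {x | x.im ≠ 0}) :
    EqOn (cderiv f) (cderiv g) {x | x.im ≠ 0} := fun x hx => by
  rw [cderiv, cderiv, (hfg.eventuallyEq_of_mem (isOpen_im_ne_zero.mem_nhds hx)).fderiv_eq]

theorem sderiv'_eqOn {f g : ℍq → ℍq} (hfg : EqOn f g {x | x.im ≠ 0}) :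
    EqOn (sderiv' f) (sderiv' g) {x | x.im ≠ 0} := fun x hx => by
  have hstar : (star x).im ≠ 0 := by simpa using hx
  rw [sderiv', sderiv', hfg hx, hfg hstar]

theorem opCS_iterate_eqOn {f g : ℍq → ℍq} (hfg : EqOn f g {x | x.im ≠ 0}) (k : ℕ) :
    EqOn (opCS^[k] f) (opCS^[k] g) {x | x.im ≠ 0} := by
  induction k generalizing f g with
  | zero => exact hfg
  | succ _ ih => exact ih (cderiv_eqOn (sderiv'_eqOn hfg))

theorem opCS_ofStem {α β : ℝ × ℝ → ℍq} (hβ : Differentiable ℝ β)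
    (hαβ : ∀ p, reDeriv β p = (2 : ℝ) • imSqDeriv α p) :
    EqOn (opCS (ofStem α β)) (ofStem (imSqDeriv α) (imSqDeriv β)) {x | x.im ≠ 0} := by
  intro x hx
  have hs : EqOn (sderiv' (ofStem α β)) (fun y => β (sliceCoord y)) {x | x.im ≠ 0} :=
    fun y hy => sderiv'_ofStem α β hy
  calc opCS (ofStem α β) x = cderiv (fun y => β (sliceCoord y)) x := cderiv_eqOn hs hx
    _ = (1 / 2 : ℝ) • reDeriv β (sliceCoord x) + x.im * imSqDeriv β (sliceCoord x) :=
      cderiv_comp_sliceCoord (hβ _) hx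
    _ = ofStem (imSqDeriv α) (imSqDeriv β) x := by
      rw [hαβ, smul_smul, ofStem]
      simp

theorem opCS_iterate_ofStem {α β : ℝ × ℝ → ℍq} (hα : ContDiff ℝ ∞ α) (hβ : ContDiff ℝ ∞ β)
    (hαβ : ∀ p, reDeriv β p = (2 : ℝ) • imSqDeriv α p) (k : ℕ) :
    EqOn (opCS^[k] (ofStem α β)) (ofStem (imSqDeriv^[k] α) (imSqDeriv^[k] β)) {x | x.im ≠ 0} := by
  induction k generalizing α β with
  | zero => exact eqOn_refl _ _
  | succ k ih =>
    have hαβ' (p : ℝ × ℝ) :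
        reDeriv (imSqDeriv β) p = (2 : ℝ) • imSqDeriv (imSqDeriv α) p := by
      rw [reDeriv_imSqDeriv (contDiff_infty.1 hβ 2), funext hαβ,
        imSqDeriv_const_smul ((contDiff_imSqDeriv hα).differentiable (by simp) p)]
    exact (opCS_iterate_eqOn (opCS_ofStem (hβ.differentiable (by simp)) hαβ) k).trans
      (ih (contDiff_imSqDeriv hα) (contDiff_imSqDeriv hβ) hαβ')

theorem opCS_iterate_ofStem_eq_zero {α β : ℝ × ℝ → ℍq} (hα : ContDiff ℝ ∞ α)
    (hβ : ContDiff ℝ ∞ β) (hαβ : ∀ p, reDeriv β p = (2 : ℝ) • imSqDeriv α p) {q₀ : ℍq}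
    (hq₀ : q₀.im ≠ 0) (h : ∀ u, α (q₀.re, u) + q₀.im * β (q₀.re, u) = 0) (k : ℕ) :
    opCS^[k] (ofStem α β) q₀ = 0 :=
  (opCS_iterate_ofStem hα hβ hαβ k hq₀).trans (imSqDeriv_iterate_add_mul_eq_zero hα hβ h k _)

theorem ofStem_coe_mul_ofStem (A B : ℝ × ℝ → ℝ) (α β : ℝ × ℝ → ℍq) (x : ℍq) :
    ofStem (fun p => (A p : ℍq)) (fun p => (B p : ℍq)) x * ofStem α β x =
      ofStem (fun p => A p • α p + (p.2 * B p) • β p) (fun p => A p • β p + B p • α p) x := by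
  simp only [ofStem, Quaternion.coe_mul_eq_smul, Quaternion.mul_coe_eq_smul, add_mul, mul_add,
    smul_mul_assoc, mul_smul_comm, ← mul_assoc x.im x.im, im_mul_im]
  simp only [sliceCoord]
  module

end SliceFunctions

section CharacteristicPolynomial

/-- The first component of the slice function `Δ_{q₀}`: `Δ_{q₀} = deltaFst + Im(x) deltaSnd`. -/
def deltaFst (q₀ : ℍq) (p : ℝ × ℝ) : ℝ := p.1 ^ 2 + p.2 - 2 * q₀.re * p.1 + ‖q₀‖ ^ 2

/-- The second component of the slice function `Δ_{q₀}`, that is, its spherical derivative. -/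
def deltaSnd (q₀ : ℍq) (p : ℝ × ℝ) : ℝ := 2 * (p.1 - q₀.re)

theorem Delta_eq_ofStem (q₀ x : ℍq) :
    Delta q₀ x = ofStem (fun p => (deltaFst q₀ p : ℍq)) (fun p => (deltaSnd q₀ p : ℍq)) x := by
  have hnorm (y : ℍq) : ‖y‖ ^ 2 = y.re ^ 2 + y.imI ^ 2 + y.imJ ^ 2 + y.imK ^ 2 := by
    rw [sq, ← Quaternion.normSq_eq_norm_mul_self, Quaternion.normSq_def']
  have htwo : (2 : ℍq) = ((2 : ℝ) : ℍq) := by norm_cast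
  simp only [Delta, ofStem, sliceCoord, deltaFst, deltaSnd, hnorm, htwo, sq x]
  ext <;> simp [-Quaternion.coe_pow] <;> ring

theorem isRegularStem_delta (q₀ : ℍq) : IsRegularStem (deltaFst q₀) (deltaSnd q₀) := by
  have hs (p : ℝ × ℝ) : HasFDerivAt Prod.fst (ContinuousLinearMap.fst ℝ ℝ ℝ) p := hasFDerivAt_fst
  have hfst (p v : ℝ × ℝ) : fderiv ℝ (deltaFst q₀) p v = 2 * (p.1 - q₀.re) * v.1 + v.2 := by
    have h : HasFDerivAt (deltaFst q₀) _ p :=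
      ((((hs p).pow 2).add hasFDerivAt_snd).sub ((hs p).const_mul (2 * q₀.re))).add_const (‖q₀‖ ^ 2)
    rw [h.fderiv]
    simp only [Nat.add_one_sub_one, pow_one, nsmul_eq_mul, Nat.cast_ofNat, sub_apply, add_apply,
      smul_apply, ContinuousLinearMap.coe_fst', smul_eq_mul, ContinuousLinearMap.coe_snd']
    ring
  have hsnd (p v : ℝ × ℝ) : fderiv ℝ (deltaSnd q₀) p v = 2 * v.1 := by
    have h : HasFDerivAt (deltaSnd q₀) _ p := ((hs p).sub_const q₀.re).const_mul 2
    rw [h.fderiv]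
    simp
  refine ⟨by unfold deltaFst; fun_prop, by unfold deltaSnd; fun_prop, fun p => ?_, fun p => ?_⟩
  · simp [reDeriv, imSqDeriv, hfst, hsnd, deltaSnd]
  · simp [reDeriv, imSqDeriv, hfst, hsnd]

theorem exists_isRegularStem_Delta_pow_mul (q₀ : ℍq) (p : ℕ) :
    ∃ α β : ℝ × ℝ → ℍq, IsRegularStem α β ∧
      (fun x => Delta q₀ x ^ p * (x - q₀)) = ofStem α β ∧
      ∀ u, α (q₀.re, u) + q₀.im * β (q₀.re, u) = 0 := by
  induction p with
  | zero =>
    refine ⟨_, _, isRegularStem_affine 1 (-q₀), funext fun x => ?_, fun u => ?_⟩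
    · ext <;> simp [ofStem, sliceCoord] <;> ring
    · ext <;> simp
  | succ p ih =>
    obtain ⟨α, β, hαβ, hf, hline⟩ := ih
    refine ⟨_, _, (isRegularStem_delta q₀).smul hαβ, funext fun x => ?_, fun u => ?_⟩
    · rw [pow_succ', mul_assoc, congrFun hf x, Delta_eq_ofStem, ofStem_coe_mul_ofStem]
    · have hsnd : deltaSnd q₀ (q₀.re, u) = 0 := by simp [deltaSnd]
      simp only [hsnd, mul_zero, zero_smul, add_zero, mul_smul_comm, ← smul_add, hline u,
        smul_zero]

end CharacteristicPolynomial

theorem opCS_iterate_Delta_pow_mul_general (q₀ : ℍq) (hq₀ : q₀.im ≠ 0) (p k : ℕ) :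
    opCS^[k] (fun x => Delta q₀ x ^ p * (x - q₀)) q₀ = 0 := by
  obtain ⟨α, β, hαβ, hf, hline⟩ := exists_isRegularStem_Delta_pow_mul q₀ p
  rw [hf]
  exact opCS_iterate_ofStem_eq_zero hαβ.contDiff_fst hαβ.contDiff_snd hαβ.reDeriv_snd hq₀ hline k

/-- `(∂_c∂_s)^k (Δ_{q₀}^p(x)(x−q₀))` vanishes at `q₀` for all
`0 ≤ k ≤ p`. -/
theorem opCS_iterate_Delta_pow_mul (q₀ : ℍq) (hq₀ : q₀.im ≠ 0)
    (p k : ℕ) (hp : 1 ≤ p) (hk : k ≤ p) :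
    opCS^[k] (fun x => Delta q₀ x ^ p * (x - q₀)) q₀ = 0 :=
  opCS_iterate_Delta_pow_mul_general q₀ hq₀ p k
end
end
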